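/- Let k be a positive integer, let G be a finite simple graph, let I ⊆ V(G), let P be an I-connected path decomposition of G of width at most k−1 that is S-structured for a bottleneck S, and let S' be a bottleneck with β(S,P) < α(S',P) (i.e., the interval of S lies strictly before the interval of S'). Then there exists an I-connected path decomposition P' of G with width(P') ≤ width(P) that is both S-structured and S'-structured and satisfies β(S,P') < α(S',P'). -/

import Mathlib

/-!
Write `B` for the union of the in-branches of `S'`. It is attached to the rest of the graph only
through `S'`, and its vertices occur only in bags of the interval `[α, β]` of `S'`, all of which
contain `S'`. Choose a bag `t` in `[α, β]` with the fewest vertices outside `B`. In the new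
decomposition the vertices outside `B` follow the old bags but stall at `t` for `β - α + 1`
additional steps, and `B` runs through its bags exactly during that period. By the choice of `t` no
bag gets too large, everything outside `B` waits in the new interval of `S'`, and nothing changes
before `α`, in particular in the interval of `S`.

Stalling delays `B`, so connectivity of the prefixes to `I` could be lost when some vertices of `S'`
reach `I` only through `B`. This cannot happen if `S'` is already contained in a bag before `α`, and
this is arranged by inserting bags right before `α`: build up the bag at `α` vertex by vertex,
keeping the prefix connected to `I`. Either all of `S'` can be added before any vertex of `B`, or
some in-branch enters before all of `S'` is present. In the latter case that branch is no longer an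
in-branch, and the procedure is repeated. It ends because a bottleneck always has an in-branch: all
other branches meet one of two fixed bags, which have at most `2k` vertices in total.
-/

open SimpleGraph

variable {V : Type*}

/-- `N_G(Y)`: the set of vertices outside `Y` having a neighbor in `Y`. -/
def nbhdSet (G : SimpleGraph V) (Y : Set V) : Set V :=
  {v | v ∉ Y ∧ ∃ u ∈ Y, G.Adj u v}

/-- `C` is a connected component of the subgraph of `G` induced by `U`. -/
def IsCompIn (G : SimpleGraph V) (U C : Set V) : Prop :=
  C.Nonempty ∧ C ⊆ U ∧ (G.induce C).Connected ∧
    ∀ u ∈ C, ∀ v ∈ U, G.Adj u v → v ∈ C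

/-- `C` is a connected component of `G - S`. -/
def IsCompOf (G : SimpleGraph V) (S C : Set V) : Prop :=
  IsCompIn G Sᶜ C

/-- `C` is an `S`-branch: a connected component of `G - S` with `N_G(C) = S`. -/
def IsBranch (G : SimpleGraph V) (S C : Set V) : Prop :=
  IsCompOf G S C ∧ nbhdSet G C = S

/-- `S` is a bottleneck (for the width parameter `k`): a nonempty set with
at least `2k+1` `S`-branches. -/
def IsBottleneck (G : SimpleGraph V) (k : ℕ) (S : Set V) : Prop :=
  S.Nonempty ∧ 2 * k + 1 ≤ {C : Set V | IsBranch G S C}.ncard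

/-- `(X 0, …, X (l-1))` is a path decomposition of `G`. -/
def IsPathDecomp (G : SimpleGraph V) (l : ℕ) (X : ℕ → Set V) : Prop :=
  (∀ v, ∃ i < l, v ∈ X i) ∧
  (∀ u v, G.Adj u v → ∃ i < l, u ∈ X i ∧ v ∈ X i) ∧
  (∀ i j m, i ≤ j → j ≤ m → m < l → X i ∩ X m ⊆ X j)

/-- The width of a path decomposition: the maximum bag size minus one. -/
noncomputable def pdWidth (l : ℕ) (X : ℕ → Set V) : ℕ :=
  ((Finset.range l).sup fun i => (X i).ncard) - 1

/-- The set of indices of bags meeting the vertex set `C`. -/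
def supp (l : ℕ) (X : ℕ → Set V) (C : Set V) : Set ℕ :=
  {t | t < l ∧ (C ∩ X t).Nonempty}

/-- `a(C)`: the first index of a bag meeting `C`. -/
noncomputable def firstIdx (l : ℕ) (X : ℕ → Set V) (C : Set V) : ℕ :=
  sInf (supp l X C)

/-- `b(C)`: the last index of a bag meeting `C`. -/
noncomputable def lastIdx (l : ℕ) (X : ℕ → Set V) (C : Set V) : ℕ :=
  sSup (supp l X C)

/-- `C` is an in-branch of `S` with respect to the decomposition:
an `S`-branch with `S ⊆ X (a C)` and `S ⊆ X (b C)`. -/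
def IsInBranch (G : SimpleGraph V) (l : ℕ) (X : ℕ → Set V) (S C : Set V) : Prop :=
  IsBranch G S C ∧ S ⊆ X (firstIdx l X C) ∧ S ⊆ X (lastIdx l X C)

/-- `α(S)`: the minimum of `a(H)` over in-branches `H` of `S`. -/
noncomputable def botStart (G : SimpleGraph V) (l : ℕ) (X : ℕ → Set V) (S : Set V) : ℕ :=
  sInf {i | ∃ C, IsInBranch G l X S C ∧ i = firstIdx l X C}

/-- `β(S)`: the maximum of `b(H)` over in-branches `H` of `S`. -/
noncomputable def botEnd (G : SimpleGraph V) (l : ℕ) (X : ℕ → Set V) (S : Set V) : ℕ :=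
  sSup {i | ∃ C, IsInBranch G l X S C ∧ i = lastIdx l X C}

/-- The interval `I(S,P) = [α(S), β(S)]` of a bottleneck `S`. -/
noncomputable def botInterval (G : SimpleGraph V) (l : ℕ) (X : ℕ → Set V) (S : Set V) : Set ℕ :=
  Set.Icc (botStart G l X S) (botEnd G l X S)

/-- A pre-branch of `S`. -/
def IsPreBranch (G : SimpleGraph V) (l : ℕ) (X : ℕ → Set V) (S C : Set V) : Prop :=
  IsBranch G S C ∧ ¬ IsInBranch G l X S C ∧ firstIdx l X C < botStart G l X S

/-- A post-branch of `S`. -/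
def IsPostBranch (G : SimpleGraph V) (l : ℕ) (X : ℕ → Set V) (S C : Set V) : Prop :=
  IsBranch G S C ∧ ¬ IsInBranch G l X S C ∧
    botStart G l X S ≤ firstIdx l X C ∧ botEnd G l X S < lastIdx l X C

/-- `C` waits in the interval `[i, j]` of the decomposition. -/
def WaitsIn (X : ℕ → Set V) (C : Set V) (i j : ℕ) : Prop :=
  ∀ t, i ≤ t → t ≤ j → C ∩ X t = C ∩ X i

/-- The decomposition is `S`-structured: every component of `G - S` that is not an
`S`-branch, and every pre- or post-branch of `S`, waits in `I(S,P)`. -/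
def IsStructured (G : SimpleGraph V) (l : ℕ) (X : ℕ → Set V) (S : Set V) : Prop :=
  ∀ C : Set V,
    ((IsCompOf G S C ∧ ¬ IsBranch G S C) ∨ IsPreBranch G l X S C ∨ IsPostBranch G l X S C) →
    WaitsIn X C (botStart G l X S) (botEnd G l X S)

/-- The decomposition is `I`-connected: every connected component of the subgraph
induced by any prefix of bags contains a vertex of `I`. -/
def IsIConn (G : SimpleGraph V) (l : ℕ) (X : ℕ → Set V) (I : Set V) : Prop :=
  ∀ i < l, ∀ C : Set V, IsCompIn G {v | ∃ j ≤ i, v ∈ X j} C → (C ∩ I).Nonempty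

/-! ### Connected sets and components -/

section Components

variable {G : SimpleGraph V} {U C D : Set V} {x : V}

lemma subset_of_connected_of_closed (hC : (G.induce C).Connected) (hxC : x ∈ C) (hxD : x ∈ D)
    (hD : ∀ u ∈ C, u ∈ D → ∀ v ∈ C, G.Adj u v → v ∈ D) : C ⊆ D := by
  intro y hyC
  by_contra hyD
  obtain ⟨p⟩ := hC.preconnected ⟨x, hxC⟩ ⟨y, hyC⟩
  obtain ⟨d, -, hfst, hsnd⟩ := p.exists_boundary_dart (Subtype.val ⁻¹' D) hxD hyD
  exact hsnd (hD _ d.fst.2 hfst _ d.snd.2 d.adj)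

lemma IsCompIn.subset_of_connected (hC : IsCompIn G U C) (hD : (G.induce D).Connected)
    (hDU : D ⊆ U) (hxC : x ∈ C) (hxD : x ∈ D) : D ⊆ C :=
  subset_of_connected_of_closed hD hxD hxC fun u _ huC v hv => hC.2.2.2 u huC v (hDU hv)

lemma IsCompIn.eq_of_mem (hC : IsCompIn G U C) (hD : IsCompIn G U D) (hxC : x ∈ C)
    (hxD : x ∈ D) : C = D :=
  (hD.subset_of_connected hC.2.2.1 hC.2.1 hxD hxC).antisymm
    (hC.subset_of_connected hD.2.2.1 hD.2.1 hxC hxD)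

lemma exists_isCompIn (G : SimpleGraph V) (hx : x ∈ U) : ∃ C, IsCompIn G U C ∧ x ∈ C := by
  let F : Set (Set V) := {D | D ⊆ U ∧ x ∈ D ∧ (G.induce D).Connected}
  have hxF : {x} ∈ F := ⟨by simpa using hx, rfl, by simp⟩
  have hFconn : (G.induce (⋃₀ F)).Connected :=
    induce_sUnion_connected_of_pairwise_not_disjoint ⟨_, hxF⟩
      (fun hs ht => ⟨x, hs.2.1, ht.2.1⟩) fun hs => hs.2.2
  have hxmem : x ∈ ⋃₀ F := ⟨_, hxF, rfl⟩
  refine ⟨⋃₀ F, ⟨⟨x, hxmem⟩, Set.sUnion_subset fun D hD => hD.1, hFconn, ?_⟩, hxmem⟩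
  rintro u ⟨D, hD, huD⟩ v hvU huv
  refine ⟨D ∪ {u, v}, ⟨?_, Or.inl hD.2.1, ?_⟩, by simp⟩
  · exact Set.union_subset hD.1 (Set.pair_subset (hD.1 huD) hvU)
  · exact induce_union_connected hD.2.2.preconnected
      (induce_pair_connected_of_adj huv).preconnected ⟨u, huD, by simp⟩

lemma IsBranch.eq_of_mem {S T Q H : Set V} (hQ : IsBranch G S Q) (hH : IsBranch G T H)
    (hTQ : Disjoint T Q) (hSH : Disjoint S H) (hxQ : x ∈ Q) (hxH : x ∈ H) : S = T := by
  have hQH : Q ⊆ H := hH.1.subset_of_connected hQ.1.2.2.1 hTQ.subset_compl_left hxH hxQ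
  have hHQ : H ⊆ Q := hQ.1.subset_of_connected hH.1.2.2.1 hSH.subset_compl_left hxQ hxH
  rw [← hQ.2, ← hH.2, hQH.antisymm hHQ]

lemma ncard_isBranch_le {S Z : Set V} (hZ : Z.Finite)
    (hmeet : ∀ C, IsBranch G S C → (C ∩ Z).Nonempty) :
    {C : Set V | IsBranch G S C}.ncard ≤ Z.ncard := by
  have := hZ.to_subtype
  choose g hgC hgZ using fun C : {C : Set V | IsBranch G S C} => hmeet C C.2
  refine Nat.card_le_card_of_injective (fun C => (⟨g C, hgZ C⟩ : Z)) fun C D hCD => ?_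
  have hg : g C = g D := congrArg Subtype.val hCD
  exact Subtype.ext (C.2.1.eq_of_mem D.2.1 (hgC C) (hg ▸ hgC D))

end Components

/-! ### Anchored sets -/

/-- Every component of `G[U]` meets `I`. This is expressed through sets closed under taking
neighbours in `U` instead of components, so that no component has to be constructed; such a set
may stick out of `U`, which makes the hypothesis pass to subsets of `U`. -/
def IsAnchored (G : SimpleGraph V) (I U : Set V) : Prop :=
  ∀ C : Set V, (C ∩ U).Nonempty → (∀ u ∈ C, ∀ v ∈ U, G.Adj u v → v ∈ C) → (C ∩ I).Nonempty

section Anchored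

variable {G : SimpleGraph V} {I U M N A B P Q : Set V}

lemma isAnchored_iff_forall_isCompIn :
    IsAnchored G I U ↔ ∀ C, IsCompIn G U C → (C ∩ I).Nonempty := by
  refine ⟨fun h C hC => ?_, fun h C hCU hclosed => ?_⟩
  · exact h C (hC.1.mono fun x hx => ⟨hx, hC.2.1 hx⟩) hC.2.2.2
  · obtain ⟨x, hxC, hxU⟩ := hCU
    obtain ⟨D, hD, hxD⟩ := exists_isCompIn G hxU
    have hDC : D ⊆ C := subset_of_connected_of_closed hD.2.2.1 hxD hxC
      fun u _ huC v hv => hclosed u huC v (hD.2.1 hv)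
    exact (h D hD).mono (Set.inter_subset_inter_left _ hDC)

lemma isIConn_iff_isAnchored_accumulate {l : ℕ} {X : ℕ → Set V} :
    IsIConn G l X I ↔ ∀ i < l, IsAnchored G I (Set.accumulate X i) := by
  have hprefix (i : ℕ) : {v | ∃ j ≤ i, v ∈ X j} = Set.accumulate X i :=
    Set.ext fun _ => Set.mem_accumulate.symm
  simp only [IsIConn, hprefix, isAnchored_iff_forall_isCompIn]

lemma isAnchored_insert {v : V} (hM : IsAnchored G I M) (hv : v ∈ I ∨ ∃ m ∈ M, G.Adj v m) :
    IsAnchored G I (insert v M) := by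
  intro C hCM hclosed
  by_cases hmeet : (C ∩ M).Nonempty
  · exact hM C hmeet fun u hu m hm => hclosed u hu m (Or.inr hm)
  · obtain ⟨x, hxC, rfl | hxM⟩ := hCM
    · rcases hv with hxI | ⟨m, hm, hxm⟩
      · exact ⟨x, hxC, hxI⟩
      · exact absurd ⟨m, hclosed x hxC m (Or.inr hm) hxm, hm⟩ hmeet
    · exact absurd ⟨x, hxC, hxM⟩ hmeet

lemma IsAnchored.exists_insert (hM : IsAnchored G I M) (hN : IsAnchored G I N) (hNM : ¬N ⊆ M) :
    ∃ v ∈ N \ M, IsAnchored G I (insert v M) := by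
  suffices ∃ v ∈ N \ M, v ∈ I ∨ ∃ m ∈ M, G.Adj v m by
    obtain ⟨v, hv, h⟩ := this
    exact ⟨v, hv, isAnchored_insert hM h⟩
  by_contra! hcon
  obtain ⟨x, hxN, hxM⟩ := Set.not_subset.1 hNM
  obtain ⟨v, hv, hvI⟩ := hN (N \ M) ⟨x, ⟨hxN, hxM⟩, hxN⟩ fun u hu v hv huv =>
    ⟨hv, fun hvM => (hcon u hu).2 v hvM huv⟩
  exact (hcon v hv).1 hvI

/-- Growing `U` to `N` one vertex at a time, look at the first moment when all of `S` or some
vertex of `B` has been added. -/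
lemma IsAnchored.exists_between {S : Set V} (hU : IsAnchored G I U) (hN : IsAnchored G I N)
    (hUN : U ⊆ N) (hNfin : N.Finite) (hUB : Disjoint U B) (hSN : S ⊆ N) (hSB : Disjoint S B) :
    ∃ M, U ⊆ M ∧ M ⊆ N ∧ IsAnchored G I M ∧
      ((S ⊆ M ∧ Disjoint M B) ∨ (¬S ⊆ M ∧ (M ∩ B).Nonempty)) := by
  obtain ⟨M, ⟨hMN, hUM, hM, hMB⟩, hmax⟩ :=
    (hNfin.finite_subsets.subset fun M hM => hM.1 :
      {M | M ⊆ N ∧ U ⊆ M ∧ IsAnchored G I M ∧ Disjoint M B}.Finite).exists_maximal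
      ⟨U, hUN, le_rfl, hU, hUB⟩
  by_cases hSM : S ⊆ M
  · exact ⟨M, hUM, hMN, hM, Or.inl ⟨hSM, hMB⟩⟩
  obtain ⟨v, ⟨hvN, hvM⟩, hMv⟩ := hM.exists_insert hN fun hNM => hSM (hSN.trans hNM)
  have hMvN : insert v M ⊆ N := Set.insert_subset hvN hMN
  have hUMv : U ⊆ insert v M := hUM.trans (Set.subset_insert v M)
  have hvB : v ∈ B := by
    by_contra hvB
    have hdisj : Disjoint (insert v M) B := Set.disjoint_insert_left.2 ⟨hvB, hMB⟩
    exact hvM (hmax ⟨hMvN, hUMv, hMv, hdisj⟩ (Set.subset_insert v M) (Set.mem_insert v M))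
  refine ⟨_, hUMv, hMvN, hMv, Or.inr ⟨fun hS => hSM ?_, v, Set.mem_insert v M, hvB⟩⟩
  exact (Set.subset_insert_iff_of_notMem fun hvS => hSB.notMem_of_mem_left hvS hvB).1 hS

/-- A set closed under neighbours in the mixture that misses `A` lies entirely inside or entirely
outside `B`. -/
lemma IsAnchored.sdiff_union_inter (hP : IsAnchored G I P) (hQ : IsAnchored G I Q)
    (hA : IsAnchored G I A) (hAP : A ⊆ P) (hAB : Disjoint A B) (hB : nbhdSet G B ⊆ A) :
    IsAnchored G I (P \ B ∪ Q ∩ B) := by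
  have hAM : A ⊆ P \ B ∪ Q ∩ B := fun v hv => Or.inl ⟨hAP hv, hAB.notMem_of_mem_left hv⟩
  intro C hCM hclosed
  by_cases hCA : (C ∩ A).Nonempty
  · exact hA C hCA fun u hu v hv => hclosed u hu v (hAM hv)
  have hCA' : ∀ v ∈ C, v ∉ A := fun v hvC hvA => hCA ⟨v, hvC, hvA⟩
  by_cases hCQ : (C ∩ B ∩ Q).Nonempty
  · refine (hQ (C ∩ B) hCQ ?_).mono (Set.inter_subset_inter_left _ Set.inter_subset_left)
    rintro u ⟨huC, huB⟩ v hvQ huv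
    by_cases hvB : v ∈ B
    · exact ⟨hclosed u huC v (Or.inr ⟨hvQ, hvB⟩) huv, hvB⟩
    · have hvA : v ∈ A := hB ⟨hvB, u, huB, huv⟩
      exact absurd hvA (hCA' v (hclosed u huC v (hAM hvA) huv))
  · obtain ⟨x, hxC, ⟨hxP, hxB⟩ | ⟨hxQ, hxB⟩⟩ := hCM
    · refine (hP (C \ B) ⟨x, ⟨hxC, hxB⟩, hxP⟩ ?_).mono
        (Set.inter_subset_inter_left _ Set.sdiff_subset)
      rintro u ⟨huC, huB⟩ v hvP huv
      have hvB : v ∉ B := fun hvB => hCA' u huC (hB ⟨huB, v, hvB, huv.symm⟩)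
      exact ⟨hclosed u huC v (Or.inl ⟨hvP, hvB⟩) huv, hvB⟩
    · exact absurd ⟨x, ⟨hxC, hxB⟩, hxQ⟩ hCQ

end Anchored

/-! ### Indices of a path decomposition -/

section Indices

variable {G : SimpleGraph V} {l t : ℕ} {X : ℕ → Set V} {S C : Set V}

lemma mem_supp_singleton {v : V} : t ∈ supp l X {v} ↔ t < l ∧ v ∈ X t := by
  simp only [supp, Set.mem_ofPred_eq, Set.singleton_inter_nonempty]

lemma IsPathDecomp.supp_nonempty (hP : IsPathDecomp G l X) (hC : C.Nonempty) :
    (supp l X C).Nonempty := by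
  obtain ⟨v, hv⟩ := hC
  obtain ⟨i, hi, hvi⟩ := hP.1 v
  exact ⟨i, hi, v, hv, hvi⟩

lemma isLeast_firstIdx (hC : (supp l X C).Nonempty) : IsLeast (supp l X C) (firstIdx l X C) :=
  ⟨Nat.sInf_mem hC, fun _ => Nat.sInf_le⟩

lemma isGreatest_lastIdx (hC : (supp l X C).Nonempty) :
    IsGreatest (supp l X C) (lastIdx l X C) :=
  have hbdd : BddAbove (supp l X C) := ⟨l, fun _ h => h.1.le⟩
  ⟨Nat.sSup_mem hC hbdd, fun _ => le_csSup hbdd⟩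

lemma firstIdx_le (ht : t ∈ supp l X C) : firstIdx l X C ≤ t := (isLeast_firstIdx ⟨t, ht⟩).2 ht

lemma le_lastIdx (ht : t ∈ supp l X C) : t ≤ lastIdx l X C := (isGreatest_lastIdx ⟨t, ht⟩).2 ht

lemma IsPathDecomp.firstIdx_mem_supp (hP : IsPathDecomp G l X) (hC : C.Nonempty) :
    firstIdx l X C ∈ supp l X C :=
  (isLeast_firstIdx (hP.supp_nonempty hC)).1

lemma IsPathDecomp.lastIdx_mem_supp (hP : IsPathDecomp G l X) (hC : C.Nonempty) :
    lastIdx l X C ∈ supp l X C :=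
  (isGreatest_lastIdx (hP.supp_nonempty hC)).1

lemma IsPathDecomp.firstIdx_le_lastIdx (hP : IsPathDecomp G l X) (hC : C.Nonempty) :
    firstIdx l X C ≤ lastIdx l X C :=
  firstIdx_le (hP.lastIdx_mem_supp hC)

lemma IsPathDecomp.ordConnected_supp (hP : IsPathDecomp G l X) (hC : (G.induce C).Connected) :
    (supp l X C).OrdConnected := by
  refine ⟨fun i hi j hj t ⟨hit, htj⟩ => ⟨htj.trans_lt hj.1, ?_⟩⟩
  by_contra hne
  have hXt : ∀ v ∈ C, v ∉ X t := fun v hv hvt => hne ⟨v, hv, hvt⟩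
  obtain ⟨x, hxC, hxi⟩ := hi.2
  obtain ⟨y, hyC, hyj⟩ := hj.2
  have hC_early : C ⊆ Set.accumulate X t := by
    refine subset_of_connected_of_closed hC hxC (Set.mem_accumulate.2 ⟨i, hit, hxi⟩) ?_
    intro u huC hu v _ huv
    obtain ⟨m, hm, hum⟩ := Set.mem_accumulate.1 hu
    obtain ⟨r, hr, hur, hvr⟩ := hP.2.1 u v huv
    rcases le_total r t with hrt | htr
    · exact Set.mem_accumulate.2 ⟨r, hrt, hvr⟩
    · exact absurd (hP.2.2 m t r hm htr hr ⟨hum, hur⟩) (hXt u huC)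
  obtain ⟨m, hm, hym⟩ := Set.mem_accumulate.1 (hC_early hyC)
  exact hXt y hyC (hP.2.2 m t j hm htj hj.1 ⟨hym, hyj⟩)

lemma IsBranch.exists_mem_supp {s : V} (hP : IsPathDecomp G l X) (hC : IsBranch G S C)
    (hs : s ∈ S) : ∃ i ∈ supp l X C, s ∈ X i := by
  rw [← hC.2] at hs
  obtain ⟨-, u, hu, hus⟩ := hs
  obtain ⟨i, hi, hui, hsi⟩ := hP.2.1 u s hus
  exact ⟨i, ⟨hi, u, hu, hui⟩, hsi⟩

end Indices

/-! ### The interval of a bottleneck -/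

section Bottleneck

variable {G : SimpleGraph V} {k l t : ℕ} {X : ℕ → Set V} {S C : Set V}

lemma IsBottleneck.mono {w : ℕ} (hwk : w ≤ k) (hS : IsBottleneck G k S) : IsBottleneck G w S :=
  ⟨hS.1, le_trans (by omega) hS.2⟩

lemma IsInBranch.nonempty (hC : IsInBranch G l X S C) : C.Nonempty := hC.1.1.1

lemma IsInBranch.botStart_le_firstIdx (hC : IsInBranch G l X S C) :
    botStart G l X S ≤ firstIdx l X C :=
  Nat.sInf_le ⟨C, hC, rfl⟩

lemma IsInBranch.exists_firstIdx_eq_botStart (hC : IsInBranch G l X S C) :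
    ∃ D, IsInBranch G l X S D ∧ firstIdx l X D = botStart G l X S := by
  obtain ⟨D, hD, h⟩ : botStart G l X S ∈ {i | ∃ D, IsInBranch G l X S D ∧ i = firstIdx l X D} :=
    Nat.sInf_mem ⟨_, C, hC, rfl⟩
  exact ⟨D, hD, h.symm⟩

lemma IsPathDecomp.bddAbove_lastIdx_isInBranch (hP : IsPathDecomp G l X) (S : Set V) :
    BddAbove {i | ∃ D, IsInBranch G l X S D ∧ i = lastIdx l X D} := by
  refine ⟨l, ?_⟩
  rintro _ ⟨D, hD, rfl⟩
  exact (hP.lastIdx_mem_supp hD.nonempty).1.le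

lemma IsInBranch.lastIdx_le_botEnd (hP : IsPathDecomp G l X) (hC : IsInBranch G l X S C) :
    lastIdx l X C ≤ botEnd G l X S :=
  le_csSup (hP.bddAbove_lastIdx_isInBranch S) ⟨C, hC, rfl⟩

lemma IsInBranch.exists_lastIdx_eq_botEnd (hP : IsPathDecomp G l X)
    (hC : IsInBranch G l X S C) :
    ∃ D, IsInBranch G l X S D ∧ lastIdx l X D = botEnd G l X S := by
  obtain ⟨D, hD, h⟩ : botEnd G l X S ∈ {i | ∃ D, IsInBranch G l X S D ∧ i = lastIdx l X D} :=
    Nat.sSup_mem ⟨_, C, hC, rfl⟩ (hP.bddAbove_lastIdx_isInBranch S)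
  exact ⟨D, hD, h.symm⟩

lemma IsInBranch.supp_subset_botInterval (hP : IsPathDecomp G l X) (hC : IsInBranch G l X S C) :
    supp l X C ⊆ botInterval G l X S := fun _ ht =>
  ⟨hC.botStart_le_firstIdx.trans (firstIdx_le ht), (le_lastIdx ht).trans (hC.lastIdx_le_botEnd hP)⟩

lemma IsInBranch.botStart_le_botEnd (hP : IsPathDecomp G l X) (hC : IsInBranch G l X S C) :
    botStart G l X S ≤ botEnd G l X S :=
  have h := hC.supp_subset_botInterval hP (hP.firstIdx_mem_supp hC.nonempty)
  h.1.trans h.2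

lemma IsInBranch.botEnd_lt (hP : IsPathDecomp G l X) (hC : IsInBranch G l X S C) :
    botEnd G l X S < l := by
  obtain ⟨D, hD, h⟩ := hC.exists_lastIdx_eq_botEnd hP
  exact h ▸ (hP.lastIdx_mem_supp hD.nonempty).1

lemma IsInBranch.subset_bag (hP : IsPathDecomp G l X) (hC : IsInBranch G l X S C)
    (ht : t ∈ botInterval G l X S) : S ⊆ X t := by
  obtain ⟨D, hD, hDstart⟩ := hC.exists_firstIdx_eq_botStart
  obtain ⟨E, hE, hEend⟩ := hC.exists_lastIdx_eq_botEnd hP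
  exact fun s hs => hP.2.2 _ t _ ht.1 ht.2 (hC.botEnd_lt hP)
    ⟨hDstart ▸ hD.2.1 hs, hEend ▸ hE.2.2 hs⟩

/-- Take for `p` the last first index and for `q` the first last index of a vertex of `S`. -/
lemma exists_window_of_isBranch [Finite V] (hP : IsPathDecomp G l X) (hS : S.Nonempty) :
    ∃ p < l, ∃ q < l, (∀ t ∈ Set.Icc p q, S ⊆ X t) ∧
      ∀ C, IsBranch G S C → (∃ i ∈ supp l X C, p ≤ i) ∧ ∃ j ∈ supp l X C, j ≤ q := by
  obtain ⟨s₁, hs₁, hmax⟩ := S.exists_max_image (fun s => firstIdx l X {s}) S.toFinite hS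
  obtain ⟨s₂, hs₂, hmin⟩ := S.exists_min_image (fun s => lastIdx l X {s}) S.toFinite hS
  have hfirst (s : V) := mem_supp_singleton.1 (hP.firstIdx_mem_supp (Set.singleton_nonempty s))
  have hlast (s : V) := mem_supp_singleton.1 (hP.lastIdx_mem_supp (Set.singleton_nonempty s))
  refine ⟨_, (hfirst s₁).1, _, (hlast s₂).1, fun t ht s hs => ?_, fun C hC => ⟨?_, ?_⟩⟩
  · exact hP.2.2 _ t _ ((hmax s hs).trans ht.1) (ht.2.trans (hmin s hs)) (hlast s).1
      ⟨(hfirst s).2, (hlast s).2⟩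
  · obtain ⟨i, hi, hsi⟩ := hC.exists_mem_supp hP hs₁
    exact ⟨i, hi, firstIdx_le (mem_supp_singleton.2 ⟨hi.1, hsi⟩)⟩
  · obtain ⟨j, hj, hsj⟩ := hC.exists_mem_supp hP hs₂
    exact ⟨j, hj, le_lastIdx (mem_supp_singleton.2 ⟨hj.1, hsj⟩)⟩

/-- A branch that is not an in-branch reaches out of the window `[p, q]`, in which `S` lies in all
bags, so it meets `X p ∪ X q`; these sets have at most `2k` vertices. -/
lemma IsBottleneck.exists_isInBranch [Finite V] (hS : IsBottleneck G k S)
    (hP : IsPathDecomp G l X) (hk : ∀ i < l, (X i).ncard ≤ k) : ∃ C, IsInBranch G l X S C := by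
  by_contra! hno
  obtain ⟨p, hp, q, hq, hSX, hwindow⟩ := exists_window_of_isBranch hP hS.1
  have hmeet : ∀ C, IsBranch G S C → (C ∩ (X p ∪ X q)).Nonempty := by
    intro C hC
    obtain ⟨⟨i, hi, hpi⟩, j, hj, hjq⟩ := hwindow C hC
    have hfirst := hP.firstIdx_mem_supp hC.1.1
    have hlast := hP.lastIdx_mem_supp hC.1.1
    have hsupp := hP.ordConnected_supp hC.1.2.2.1
    rw [Set.inter_union_distrib_left]
    rcases lt_or_ge (firstIdx l X C) p with hfp | hpf
    · exact (hsupp.out hfirst hi ⟨hfp.le, hpi⟩).2.inl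
    rcases lt_or_ge q (lastIdx l X C) with hql | hlq
    · exact (hsupp.out hj hlast ⟨hjq, hql.le⟩).2.inr
    · have hfl := hP.firstIdx_le_lastIdx hC.1.1
      exact absurd ⟨hC, hSX _ ⟨hpf, hfl.trans hlq⟩, hSX _ ⟨hpf.trans hfl, hlq⟩⟩ (hno C)
  have hbranches := ncard_isBranch_le (Set.toFinite _) hmeet
  have hunion := Set.ncard_union_le (X p) (X q)
  have hpk := hk p hp
  have hqk := hk q hq
  have hlarge := hS.2
  omega

end Bottleneck

/-! ### Retimings -/

section ImageSupp

variable {G : SimpleGraph V} {l l' : ℕ} {f : ℕ → ℕ} {X X' : ℕ → Set V} {T H : Set V}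

lemma apply_firstIdx (hf : Monotone f) (hsupp : f '' supp l' X' H = supp l X H)
    (hne : (supp l X H).Nonempty) : f (firstIdx l' X' H) = firstIdx l X H := by
  have hne' : (supp l' X' H).Nonempty := Set.image_nonempty.1 (hsupp ▸ hne)
  have hleast := hf.map_isLeast (isLeast_firstIdx hne')
  rw [hsupp] at hleast
  exact hleast.unique (isLeast_firstIdx hne)

lemma apply_lastIdx (hf : Monotone f) (hsupp : f '' supp l' X' H = supp l X H)
    (hne : (supp l X H).Nonempty) : f (lastIdx l' X' H) = lastIdx l X H := by
  have hne' : (supp l' X' H).Nonempty := Set.image_nonempty.1 (hsupp ▸ hne)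
  have hgreatest := hf.map_isGreatest (isGreatest_lastIdx hne')
  rw [hsupp] at hgreatest
  exact hgreatest.unique (isGreatest_lastIdx hne)

lemma IsInBranch.of_image_supp (hP : IsPathDecomp G l X) (hf : Monotone f)
    (hsupp : f '' supp l' X' H = supp l X H) (hT : ∀ i, T ⊆ X' i → T ⊆ X (f i))
    (hH : IsInBranch G l' X' T H) : IsInBranch G l X T H :=
  have hne := hP.supp_nonempty hH.nonempty
  ⟨hH.1, apply_firstIdx hf hsupp hne ▸ hT _ hH.2.1, apply_lastIdx hf hsupp hne ▸ hT _ hH.2.2⟩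

end ImageSupp

/-- `X'` arises from `X` by delaying bags from index `c` on: nothing changes before `c`, and bag `i`
of `X'` plays the role of bag `f i` of `X` as far as the set `T` and its branches are concerned.
Such a modification does not affect the interval of `T` if that interval ends before `c`. -/
structure IsRetiming (G : SimpleGraph V) (T : Set V) (c : ℕ) (f : ℕ → ℕ) (l : ℕ) (X : ℕ → Set V)
    (l' : ℕ) (X' : ℕ → Set V) : Prop where
  monotone : Monotone f
  apply_of_lt : ∀ i < c, f i = i
  le_apply : ∀ i, c ≤ i → c ≤ f i
  bag_eq : ∀ i < c, X' i = X i
  image_supp : ∀ H, IsBranch G T H → f '' supp l' X' H = supp l X H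
  subset_bag : ∀ i, T ⊆ X' i → T ⊆ X (f i)

namespace IsRetiming

variable {G : SimpleGraph V} {c l l' : ℕ} {f : ℕ → ℕ} {X X' : ℕ → Set V} {T H H₀ : Set V}

lemma apply_lt_iff {i m : ℕ} (hf : IsRetiming G T c f l X l' X') (hm : m ≤ c) :
    f i < m ↔ i < m := by
  rcases lt_or_ge i c with hi | hi
  · rw [hf.apply_of_lt i hi]
  · have hfi := hf.le_apply i hi
    omega

lemma apply_firstIdx (hf : IsRetiming G T c f l X l' X') (hP : IsPathDecomp G l X)
    (hH : IsBranch G T H) : f (firstIdx l' X' H) = firstIdx l X H :=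
  _root_.apply_firstIdx hf.monotone (hf.image_supp H hH) (hP.supp_nonempty hH.1.1)

lemma apply_lastIdx (hf : IsRetiming G T c f l X l' X') (hP : IsPathDecomp G l X)
    (hH : IsBranch G T H) : f (lastIdx l' X' H) = lastIdx l X H :=
  _root_.apply_lastIdx hf.monotone (hf.image_supp H hH) (hP.supp_nonempty hH.1.1)

lemma isInBranch (hf : IsRetiming G T c f l X l' X') (hP : IsPathDecomp G l X)
    (hH : IsInBranch G l' X' T H) : IsInBranch G l X T H :=
  hH.of_image_supp hP hf.monotone (hf.image_supp H hH.1) hf.subset_bag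

lemma firstIdx_eq (hf : IsRetiming G T c f l X l' X') (hP : IsPathDecomp G l X)
    (hH : IsBranch G T H) (hc : firstIdx l X H < c) : firstIdx l' X' H = firstIdx l X H := by
  rw [← hf.apply_firstIdx hP hH, hf.apply_lt_iff le_rfl] at hc
  rw [← hf.apply_firstIdx hP hH, hf.apply_of_lt _ hc]

lemma lastIdx_eq (hf : IsRetiming G T c f l X l' X') (hP : IsPathDecomp G l X)
    (hH : IsBranch G T H) (hc : lastIdx l X H < c) : lastIdx l' X' H = lastIdx l X H := by
  rw [← hf.apply_lastIdx hP hH, hf.apply_lt_iff le_rfl] at hc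
  rw [← hf.apply_lastIdx hP hH, hf.apply_of_lt _ hc]

lemma firstIdx_eq_of_isInBranch (hf : IsRetiming G T c f l X l' X') (hP : IsPathDecomp G l X)
    (hc : botEnd G l X T < c) (hH : IsInBranch G l X T H) : firstIdx l' X' H = firstIdx l X H :=
  hf.firstIdx_eq hP hH.1 <| (hP.firstIdx_le_lastIdx hH.nonempty).trans_lt <|
    (hH.lastIdx_le_botEnd hP).trans_lt hc

lemma lastIdx_eq_of_isInBranch (hf : IsRetiming G T c f l X l' X') (hP : IsPathDecomp G l X)
    (hc : botEnd G l X T < c) (hH : IsInBranch G l X T H) : lastIdx l' X' H = lastIdx l X H :=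
  hf.lastIdx_eq hP hH.1 ((hH.lastIdx_le_botEnd hP).trans_lt hc)

lemma isInBranch_iff (hf : IsRetiming G T c f l X l' X') (hP : IsPathDecomp G l X)
    (hc : botEnd G l X T < c) : IsInBranch G l' X' T H ↔ IsInBranch G l X T H := by
  refine ⟨hf.isInBranch hP, fun hH => ?_⟩
  have hlast : lastIdx l X H < c := (hH.lastIdx_le_botEnd hP).trans_lt hc
  have hfirst : firstIdx l X H < c := (hP.firstIdx_le_lastIdx hH.nonempty).trans_lt hlast
  refine ⟨hH.1, ?_, ?_⟩
  · rw [hf.firstIdx_eq hP hH.1 hfirst, hf.bag_eq _ hfirst]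
    exact hH.2.1
  · rw [hf.lastIdx_eq hP hH.1 hlast, hf.bag_eq _ hlast]
    exact hH.2.2

lemma botStart_eq (hf : IsRetiming G T c f l X l' X') (hP : IsPathDecomp G l X)
    (hc : botEnd G l X T < c) : botStart G l' X' T = botStart G l X T := by
  refine congrArg sInf (Set.ext fun i => exists_congr fun H => ?_)
  rw [hf.isInBranch_iff hP hc]
  exact and_congr_right fun hH => by rw [hf.firstIdx_eq_of_isInBranch hP hc hH]

lemma botEnd_eq (hf : IsRetiming G T c f l X l' X') (hP : IsPathDecomp G l X)
    (hc : botEnd G l X T < c) : botEnd G l' X' T = botEnd G l X T := by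
  refine congrArg sSup (Set.ext fun i => exists_congr fun H => ?_)
  rw [hf.isInBranch_iff hP hc]
  exact and_congr_right fun hH => by rw [hf.lastIdx_eq_of_isInBranch hP hc hH]

lemma le_botStart (hf : IsRetiming G T c f l X l' X') (hP : IsPathDecomp G l X)
    (hc : c ≤ botStart G l X T) (hH₀ : IsInBranch G l' X' T H₀) : c ≤ botStart G l' X' T := by
  obtain ⟨H, hH, hstart⟩ := hH₀.exists_firstIdx_eq_botStart
  rw [← hstart, ← not_lt, ← hf.apply_lt_iff le_rfl, hf.apply_firstIdx hP hH.1, not_lt]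
  exact hc.trans (hf.isInBranch hP hH).botStart_le_firstIdx

lemma isPreBranch (hf : IsRetiming G T c f l X l' X') (hP : IsPathDecomp G l X)
    (hc : botEnd G l X T < c) (hH₀ : IsInBranch G l X T H₀) (hH : IsPreBranch G l' X' T H) :
    IsPreBranch G l X T H := by
  obtain ⟨hbranch, hnot, hlt⟩ := hH
  rw [hf.isInBranch_iff hP hc] at hnot
  rw [hf.botStart_eq hP hc, ← hf.apply_lt_iff ((hH₀.botStart_le_botEnd hP).trans hc.le),
    hf.apply_firstIdx hP hbranch] at hlt
  exact ⟨hbranch, hnot, hlt⟩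

lemma isPostBranch (hf : IsRetiming G T c f l X l' X') (hP : IsPathDecomp G l X)
    (hc : botEnd G l X T < c) (hH₀ : IsInBranch G l X T H₀) (hH : IsPostBranch G l' X' T H) :
    IsPostBranch G l X T H := by
  obtain ⟨hbranch, hnot, hle, hlt⟩ := hH
  rw [hf.isInBranch_iff hP hc] at hnot
  rw [hf.botStart_eq hP hc, ← not_lt,
    ← hf.apply_lt_iff ((hH₀.botStart_le_botEnd hP).trans hc.le),
    hf.apply_firstIdx hP hbranch, not_lt] at hle
  rw [hf.botEnd_eq hP hc, ← not_le, ← Nat.lt_succ_iff, ← hf.apply_lt_iff hc,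
    hf.apply_lastIdx hP hbranch, Nat.lt_succ_iff, not_le] at hlt
  exact ⟨hbranch, hnot, hle, hlt⟩

lemma isStructured (hf : IsRetiming G T c f l X l' X') (hP : IsPathDecomp G l X)
    (hc : botEnd G l X T < c) (hH₀ : IsInBranch G l X T H₀) (hstr : IsStructured G l X T) :
    IsStructured G l' X' T := by
  intro C hC t hst hte
  have hwaits : WaitsIn X C (botStart G l X T) (botEnd G l X T) :=
    hstr C <| hC.imp_right <| Or.imp (hf.isPreBranch hP hc hH₀) (hf.isPostBranch hP hc hH₀)
  rw [hf.botStart_eq hP hc] at hst ⊢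
  rw [hf.botEnd_eq hP hc] at hte
  rw [hf.bag_eq t (hte.trans_lt hc), hf.bag_eq _ ((hst.trans hte).trans_lt hc)]
  exact hwaits t hst hte

end IsRetiming

/-- The index map that repeats the value `t` at the `n` indices following `t`. Bag `i` of a
decomposition stalling at `t` for `n` steps is old bag `stallIdx t n i`. -/
def stallIdx (t n i : ℕ) : ℕ := max (min i t) (i - n)

section StallIdx

variable {t n i j l : ℕ}

lemma stallIdx_monotone (t n : ℕ) : Monotone (stallIdx t n) := fun i j hij => by
  simp only [stallIdx]; omega

lemma stallIdx_of_le (hi : i ≤ t) : stallIdx t n i = i := by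
  simp only [stallIdx]; omega

lemma le_stallIdx (hi : t ≤ i) : t ≤ stallIdx t n i := by
  simp only [stallIdx]; omega

lemma stallIdx_eq_of_mem_Icc (hi : i ∈ Set.Icc t (t + n)) : stallIdx t n i = t := by
  have := hi.1
  have := hi.2
  simp only [stallIdx]; omega

lemma stallIdx_lt (ht : t < l) (hi : i < l + n) : stallIdx t n i < l := by
  simp only [stallIdx]; omega

lemma exists_stallIdx_eq (hn : 0 < n) (hj : j < l) :
    ∃ i < l + n, i ≠ t ∧ stallIdx t n i = j := by
  simp only [stallIdx]
  rcases lt_or_ge j t with hjt | htj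
  · exact ⟨j, by omega, by omega, by omega⟩
  · exact ⟨j + n, by omega, by omega, by omega⟩

lemma exists_le_stallIdx_eq (hj : j ≤ stallIdx t n i) : ∃ m ≤ i, stallIdx t n m = j := by
  simp only [stallIdx] at *
  rcases le_or_gt j t with hjt | htj
  · exact ⟨j, by omega, by omega⟩
  · exact ⟨j + n, by omega, by omega⟩

end StallIdx

/-! ### Admissible decompositions -/

/-- The union of the in-branches of `S`, which is the part of the graph that keeps moving in the
interval of `S` when everything else is made to wait. -/
def inBranchUnion (G : SimpleGraph V) (l : ℕ) (X : ℕ → Set V) (S : Set V) : Set V :=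
  ⋃₀ {C | IsInBranch G l X S C}

section InBranchUnion

variable {G : SimpleGraph V} {l i : ℕ} {X : ℕ → Set V} {S C : Set V} {v : V}

lemma IsInBranch.subset_inBranchUnion (hC : IsInBranch G l X S C) : C ⊆ inBranchUnion G l X S :=
  Set.subset_sUnion_of_mem hC

lemma disjoint_inBranchUnion : Disjoint S (inBranchUnion G l X S) :=
  Set.disjoint_sUnion_right.2 fun _ hC => Set.subset_compl_iff_disjoint_left.1 hC.1.1.2.1

lemma nbhdSet_inBranchUnion_subset : nbhdSet G (inBranchUnion G l X S) ⊆ S := by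
  rintro v ⟨hv, u, ⟨C, hC, huC⟩, huv⟩
  rw [← hC.1.2]
  exact ⟨fun hvC => hv ⟨C, hC, hvC⟩, u, huC, huv⟩

lemma mem_botInterval_of_mem_inBranchUnion (hP : IsPathDecomp G l X)
    (hv : v ∈ inBranchUnion G l X S) (hi : i < l) (hvi : v ∈ X i) : i ∈ botInterval G l X S := by
  obtain ⟨C, hC, hvC⟩ := hv
  exact hC.supp_subset_botInterval hP ⟨hi, v, hvC, hvi⟩

lemma IsCompOf.disjoint_inBranchUnion (hC : IsCompOf G S C) (hnot : ¬IsInBranch G l X S C) :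
    Disjoint C (inBranchUnion G l X S) := by
  refine Set.disjoint_left.2 fun v hvC ⟨Q, hQ, hvQ⟩ => hnot ?_
  rwa [IsCompIn.eq_of_mem hC hQ.1.1 hvC hvQ]

lemma disjoint_accumulate_inBranchUnion (hP : IsPathDecomp G l X) (hil : i < l)
    (hi : i < botStart G l X S) : Disjoint (Set.accumulate X i) (inBranchUnion G l X S) := by
  refine Set.disjoint_left.2 fun v hv hvB => ?_
  obtain ⟨j, hj, hvj⟩ := Set.mem_accumulate.1 hv
  have hjstart := (mem_botInterval_of_mem_inBranchUnion hP hvB (hj.trans_lt hil) hvj).1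
  omega

end InBranchUnion

/-- An `I`-connected path decomposition with bags of size at most `k` that is `T`-structured and
has the interval of the bottleneck `T` before that of the bottleneck `S`; it remains to make it
`S`-structured. The roles of `T` and `S` are those of `S` and `S'` in the theorem. -/
structure IsAdmissible (G : SimpleGraph V) (I : Set V) (k : ℕ) (T S : Set V) (l : ℕ)
    (X : ℕ → Set V) : Prop where
  isBottleneck_left : IsBottleneck G k T
  isBottleneck_right : IsBottleneck G k S
  isPathDecomp : IsPathDecomp G l X
  isAnchored : ∀ i < l, IsAnchored G I (Set.accumulate X i)
  ncard_le : ∀ i < l, (X i).ncard ≤ k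
  isStructured : IsStructured G l X T
  botEnd_lt : botEnd G l X T < botStart G l X S

namespace IsAdmissible

variable [Finite V] {G : SimpleGraph V} {I : Set V} {k l : ℕ} {T S : Set V} {X : ℕ → Set V}

lemma exists_isInBranch_left (h : IsAdmissible G I k T S l X) : ∃ C, IsInBranch G l X T C :=
  h.isBottleneck_left.exists_isInBranch h.isPathDecomp h.ncard_le

lemma exists_isInBranch_right (h : IsAdmissible G I k T S l X) : ∃ C, IsInBranch G l X S C :=
  h.isBottleneck_right.exists_isInBranch h.isPathDecomp h.ncard_le

lemma botStart_mem_botInterval (h : IsAdmissible G I k T S l X) :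
    botStart G l X S ∈ botInterval G l X S := by
  obtain ⟨C, hC⟩ := h.exists_isInBranch_right
  exact ⟨le_rfl, hC.botStart_le_botEnd h.isPathDecomp⟩

lemma botStart_lt (h : IsAdmissible G I k T S l X) : botStart G l X S < l := by
  obtain ⟨C, hC⟩ := h.exists_isInBranch_right
  exact h.botStart_mem_botInterval.2.trans_lt (hC.botEnd_lt h.isPathDecomp)

lemma subset_bag (h : IsAdmissible G I k T S l X) {t : ℕ} (ht : t ∈ botInterval G l X S) :
    S ⊆ X t := by
  obtain ⟨C, hC⟩ := h.exists_isInBranch_right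
  exact hC.subset_bag h.isPathDecomp ht

end IsAdmissible

/-! ### Inserting a bag -/

/-- The sequence `X` with the extra bag `Y` inserted between `X a` and `X (a + 1)`. -/
def insertBag (X : ℕ → Set V) (a : ℕ) (Y : Set V) : ℕ → Set V :=
  Function.update (X ∘ stallIdx (a + 1) 1) (a + 1) Y

section InsertBag

variable {G : SimpleGraph V} {a i j l : ℕ} {X : ℕ → Set V} {Y : Set V}

lemma insertBag_self : insertBag X a Y (a + 1) = Y := Function.update_self ..

lemma insertBag_of_ne (hi : i ≠ a + 1) : insertBag X a Y i = X (stallIdx (a + 1) 1 i) :=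
  Function.update_of_ne hi ..

lemma insertBag_of_le (hi : i ≤ a) : insertBag X a Y i = X i := by
  rw [insertBag_of_ne (by omega), stallIdx_of_le (by omega)]

lemma insertBag_subset (hY : Y ⊆ X (a + 1)) (i : ℕ) :
    insertBag X a Y i ⊆ X (stallIdx (a + 1) 1 i) := by
  rcases eq_or_ne i (a + 1) with rfl | hi
  · rwa [insertBag_self, stallIdx_of_le le_rfl]
  · exact (insertBag_of_ne hi).subset

lemma exists_insertBag_eq (X : ℕ → Set V) (Y : Set V) (hj : j < l) :
    ∃ i < l + 1, stallIdx (a + 1) 1 i = j ∧ insertBag X a Y i = X j := by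
  obtain ⟨i, hi, hia, hij⟩ := exists_stallIdx_eq (t := a + 1) one_pos hj
  exact ⟨i, hi, hij, hij ▸ insertBag_of_ne hia⟩

lemma isPathDecomp_insertBag (hP : IsPathDecomp G l X) (ha : a + 1 < l)
    (hY : Y ⊆ X (a + 1)) (hXY : X a ∩ X (a + 1) ⊆ Y) :
    IsPathDecomp G (l + 1) (insertBag X a Y) := by
  refine ⟨fun v => ?_, fun u v huv => ?_, fun i j m hij hjm hm v hv => ?_⟩
  · obtain ⟨j, hj, hvj⟩ := hP.1 v
    obtain ⟨i, hi, -, hij⟩ := exists_insertBag_eq X Y hj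
    exact ⟨i, hi, hij ▸ hvj⟩
  · obtain ⟨j, hj, huvj⟩ := hP.2.1 u v huv
    obtain ⟨i, hi, -, hij⟩ := exists_insertBag_eq X Y hj
    exact ⟨i, hi, hij ▸ huvj⟩
  · have hml : stallIdx (a + 1) 1 m < l := stallIdx_lt ha hm
    have hvm := insertBag_subset hY m hv.2
    have hvi := insertBag_subset hY i hv.1
    rcases ne_or_eq j (a + 1) with hja | rfl
    · rw [insertBag_of_ne hja]
      exact hP.2.2 _ _ _ (stallIdx_monotone _ _ hij) (stallIdx_monotone _ _ hjm) hml ⟨hvi, hvm⟩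
    rcases hij.eq_or_lt with rfl | hia
    · exact hv.1
    rw [stallIdx_of_le hij] at hvi
    have ham : a + 1 ≤ stallIdx (a + 1) 1 m := le_stallIdx hjm
    rw [insertBag_self]
    exact hXY ⟨hP.2.2 i a _ (by omega) (by omega) hml ⟨hvi, hvm⟩,
      hP.2.2 i (a + 1) _ hij ham hml ⟨hvi, hvm⟩⟩

lemma isRetiming_insertBag (G : SimpleGraph V) (T : Set V) (ha : a + 1 < l)
    (hY : Y ⊆ X (a + 1)) :
    IsRetiming G T (a + 1) (stallIdx (a + 1) 1) l X (l + 1) (insertBag X a Y) where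
  monotone := stallIdx_monotone _ _
  apply_of_lt i hi := stallIdx_of_le hi.le
  le_apply i hi := le_stallIdx hi
  bag_eq i hi := insertBag_of_le (Nat.lt_succ_iff.1 hi)
  image_supp H _ := by
    ext j
    constructor
    · rintro ⟨i, ⟨hi, hHi⟩, rfl⟩
      exact ⟨stallIdx_lt ha hi, hHi.mono (Set.inter_subset_inter_right _ (insertBag_subset hY i))⟩
    · rintro ⟨hj, hHj⟩
      obtain ⟨i, hi, hij, hbag⟩ := exists_insertBag_eq X Y hj
      exact ⟨i, ⟨hi, hbag ▸ hHj⟩, hij⟩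
  subset_bag i hT := hT.trans (insertBag_subset hY i)

lemma accumulate_insertBag_of_le (hi : i ≤ a) :
    Set.accumulate (insertBag X a Y) i = Set.accumulate X i :=
  Set.iUnion₂_congr fun _ hj => insertBag_of_le (hj.trans hi)

lemma accumulate_insertBag_self :
    Set.accumulate (insertBag X a Y) (a + 1) = Set.accumulate X a ∪ Y := by
  rw [Set.accumulate_succ, accumulate_insertBag_of_le le_rfl, insertBag_self]

lemma accumulate_insertBag_succ (hY : Y ⊆ X (a + 1)) (hi : a + 1 ≤ i) :
    Set.accumulate (insertBag X a Y) (i + 1) = Set.accumulate X i := by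
  have hbag {i : ℕ} (hi : a + 1 ≤ i) : insertBag X a Y (i + 1) = X i := by
    rw [insertBag_of_ne (by omega)]
    congr 1
    simp only [stallIdx]
    omega
  induction i, hi using Nat.le_induction with
  | base =>
    rw [Set.accumulate_succ, accumulate_insertBag_self, hbag le_rfl, Set.union_assoc,
      Set.union_eq_self_of_subset_left hY, Set.accumulate_succ]
  | succ i hi ih => rw [Set.accumulate_succ, ih, hbag (by omega), Set.accumulate_succ]

end InsertBag

section Admissible

variable [Finite V] {G : SimpleGraph V} {I : Set V} {a k l : ℕ} {T S Y : Set V} {X : ℕ → Set V}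

lemma isAdmissible_insertBag (h : IsAdmissible G I k T S l X) (ha : botStart G l X S = a + 1)
    (hY : Y ⊆ X (a + 1)) (hXY : X a ∩ X (a + 1) ⊆ Y)
    (hanchored : IsAnchored G I (Set.accumulate X a ∪ Y)) :
    IsAdmissible G I k T S (l + 1) (insertBag X a Y) := by
  have hal : a + 1 < l := ha ▸ h.botStart_lt
  have hc : botEnd G l X T < a + 1 := ha ▸ h.botEnd_lt
  have hP := isPathDecomp_insertBag h.isPathDecomp hal hY hXY
  have hcard : ∀ i < l + 1, (insertBag X a Y i).ncard ≤ k := fun i hi =>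
    (Set.ncard_le_ncard (insertBag_subset hY i)).trans (h.ncard_le _ (stallIdx_lt hal hi))
  obtain ⟨H₀, hH₀⟩ := h.exists_isInBranch_left
  obtain ⟨H, hH⟩ := h.isBottleneck_right.exists_isInBranch hP hcard
  refine ⟨h.isBottleneck_left, h.isBottleneck_right, hP, fun i hi => ?_, hcard,
    (isRetiming_insertBag G T hal hY).isStructured h.isPathDecomp hc hH₀ h.isStructured, ?_⟩
  · rcases lt_trichotomy i (a + 1) with hia | rfl | hia
    · rw [accumulate_insertBag_of_le (by omega)]
      exact h.isAnchored i (by omega)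
    · rwa [accumulate_insertBag_self]
    · obtain ⟨i, rfl⟩ := Nat.exists_eq_succ_of_ne_zero (Nat.ne_zero_of_lt hia)
      rw [accumulate_insertBag_succ hY (Nat.lt_succ_iff.1 hia)]
      exact h.isAnchored i (by omega)
  · rw [(isRetiming_insertBag G T hal hY).botEnd_eq h.isPathDecomp hc]
    exact hc.trans_le ((isRetiming_insertBag G S hal hY).le_botStart h.isPathDecomp ha.ge hH)

end Admissible

namespace IsAdmissible

variable [Finite V] {G : SimpleGraph V} {I : Set V} {a k l : ℕ} {T S Y : Set V} {X : ℕ → Set V}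

lemma lt_botStart_insertBag (h : IsAdmissible G I k T S l X) (ha : botStart G l X S = a + 1)
    (hY : Y ⊆ X (a + 1)) (hYB : Disjoint Y (inBranchUnion G l X S))
    (h' : IsAdmissible G I k T S (l + 1) (insertBag X a Y)) :
    a + 1 < botStart G (l + 1) (insertBag X a Y) S := by
  have hf := isRetiming_insertBag G S (ha ▸ h.botStart_lt) hY
  obtain ⟨C, hC⟩ := h'.exists_isInBranch_right
  obtain ⟨H, hH, hstart⟩ := hC.exists_firstIdx_eq_botStart
  refine (hf.le_botStart h.isPathDecomp ha.ge hH).lt_of_ne fun heq => ?_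
  obtain ⟨-, v, hvH, hvY⟩ := h'.isPathDecomp.firstIdx_mem_supp hH.nonempty
  rw [hstart, ← heq, insertBag_self] at hvY
  exact hYB.notMem_of_mem_left hvY ⟨H, hf.isInBranch h.isPathDecomp hH, hvH⟩

/-- An in-branch meeting `Y` now starts in the bag `Y`, so it is not an in-branch any more. -/
lemma ncard_isInBranch_insertBag_lt (h : IsAdmissible G I k T S l X)
    (ha : botStart G l X S = a + 1) (hY : Y ⊆ X (a + 1)) (hSY : ¬S ⊆ Y)
    (hYB : (Y ∩ inBranchUnion G l X S).Nonempty) :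
    {C | IsInBranch G (l + 1) (insertBag X a Y) S C}.ncard <
      {C | IsInBranch G l X S C}.ncard := by
  have hal : a + 1 < l := ha ▸ h.botStart_lt
  have hf := isRetiming_insertBag G S hal hY
  obtain ⟨v, hvY, H, hH, hvH⟩ := hYB
  refine Set.ncard_lt_ncard ⟨fun C hC => hf.isInBranch h.isPathDecomp hC, fun hsub => hSY ?_⟩
  have hH' : IsInBranch G (l + 1) (insertBag X a Y) S H := hsub hH
  have hle : firstIdx (l + 1) (insertBag X a Y) H ≤ a + 1 :=
    firstIdx_le ⟨by omega, v, hvH, by rwa [insertBag_self]⟩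
  have hge : a + 1 ≤ firstIdx (l + 1) (insertBag X a Y) H :=
    (hf.le_botStart h.isPathDecomp ha.ge hH').trans hH'.botStart_le_firstIdx
  have hSsub := hH'.2.1
  rwa [le_antisymm hle hge, insertBag_self] at hSsub

lemma exists_bag (h : IsAdmissible G I k T S l X) (ha : botStart G l X S = a + 1) :
    ∃ Y ⊆ X (a + 1), X a ∩ X (a + 1) ⊆ Y ∧ IsAnchored G I (Set.accumulate X a ∪ Y) ∧
      ((S ⊆ Y ∧ Disjoint Y (inBranchUnion G l X S)) ∨
        (¬S ⊆ Y ∧ (Y ∩ inBranchUnion G l X S).Nonempty)) := by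
  have hal : a + 1 < l := ha ▸ h.botStart_lt
  have hSX : S ⊆ X (a + 1) := ha ▸ h.subset_bag h.botStart_mem_botInterval
  have hB := disjoint_accumulate_inBranchUnion h.isPathDecomp (by omega : a < l)
    (by omega : a < botStart G l X S)
  obtain ⟨M, haM, hMa, hM, hSM⟩ := (h.isAnchored a (by omega)).exists_between
    (h.isAnchored (a + 1) hal) (Set.accumulate_succ X a ▸ Set.subset_union_left) (Set.toFinite _)
    hB (hSX.trans (Set.subset_accumulate (s := X))) disjoint_inBranchUnion
  rw [Set.accumulate_succ] at hMa
  have hMX : Set.accumulate X a ∪ M ∩ X (a + 1) = M := by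
    rw [Set.union_inter_distrib_left, Set.union_eq_self_of_subset_left haM,
      Set.inter_eq_left.2 hMa]
  refine ⟨M ∩ X (a + 1), Set.inter_subset_right,
    Set.inter_subset_inter_left _ (Set.subset_accumulate.trans haM), hMX.symm ▸ hM, ?_⟩
  refine hSM.imp (fun ⟨hSM, hMB⟩ => ?_) fun ⟨hSM, v, hvM, hvB⟩ => ?_
  · exact ⟨Set.subset_inter hSM hSX, hMB.mono_left Set.inter_subset_left⟩
  · have hvX : v ∈ X (a + 1) := (hMa hvM).resolve_left (hB.notMem_of_mem_right hvB)
    exact ⟨fun hS => hSM (hS.trans Set.inter_subset_left), v, ⟨hvM, hvX⟩, hvB⟩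

lemma exists_subset_bag_of_lt_botStart (h : IsAdmissible G I k T S l X) :
    ∃ l' X', IsAdmissible G I k T S l' X' ∧ ∃ i < botStart G l' X' S, S ⊆ X' i := by
  induction hn : {C | IsInBranch G l X S C}.ncard using Nat.strong_induction_on
    generalizing l X with
  | _ n ih =>
    obtain ⟨a, ha⟩ := Nat.exists_eq_succ_of_ne_zero (Nat.ne_zero_of_lt h.botEnd_lt)
    obtain ⟨Y, hY, hXY, hanchored, ⟨hSY, hYB⟩ | ⟨hSY, hYB⟩⟩ := h.exists_bag ha
    · have h' := isAdmissible_insertBag h ha hY hXY hanchored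
      exact ⟨_, _, h', a + 1, h.lt_botStart_insertBag ha hY hYB h', insertBag_self.symm ▸ hSY⟩
    · exact ih _ (hn ▸ h.ncard_isInBranch_insertBag_lt ha hY hSY hYB)
        (isAdmissible_insertBag h ha hY hXY hanchored) rfl

end IsAdmissible

/-! ### Stalling everything outside a confined set -/

/-- The set `B` occurs only in the `n` bags from `X a` on, and is separated from the rest of the
graph by a set `S` that is contained in all of these bags. Then `B` can be moved through its bags
independently of the other vertices. -/
structure IsConfined (G : SimpleGraph V) (l : ℕ) (X : ℕ → Set V) (B S : Set V) (a n : ℕ) :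
    Prop where
  pos : 0 < n
  add_le : a + n ≤ l
  exists_eq_add : ∀ v ∈ B, ∀ i < l, v ∈ X i → ∃ d < n, i = a + d
  nbhdSet_subset : nbhdSet G B ⊆ S
  disjoint : Disjoint S B
  subset_bag : ∀ i ∈ Set.Ico a (a + n), S ⊆ X i

/-- The decomposition in which the vertices outside `B` stall at bag `t` for `n` additional steps,
during which the vertices of `B` run through the bags `X a, …, X (a + n - 1)`. -/
def stall (X : ℕ → Set V) (B : Set V) (a t n i : ℕ) : Set V :=
  (X (stallIdx t n i) \ B) ∪ {v | v ∈ B ∧ ∃ d < n, i = t + 1 + d ∧ v ∈ X (a + d)}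

section Stall

variable {G : SimpleGraph V} {I : Set V} {a c d i j k l n t : ℕ} {X : ℕ → Set V}
  {B C H S T : Set V} {v : V}

lemma mem_stall_of_notMem (hv : v ∉ B) : v ∈ stall X B a t n i ↔ v ∈ X (stallIdx t n i) := by
  simp [stall, hv]

lemma mem_stall_of_mem (hv : v ∈ B) :
    v ∈ stall X B a t n i ↔ ∃ d < n, i = t + 1 + d ∧ v ∈ X (a + d) := by
  simp [stall, hv]

lemma mem_Ioc_of_mem_stall (hvB : v ∈ B) (hv : v ∈ stall X B a t n i) :
    i ∈ Set.Ioc t (t + n) := by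
  obtain ⟨d, hd, rfl, -⟩ := (mem_stall_of_mem hvB).1 hv
  constructor <;> omega

lemma inter_stall_of_disjoint (hCB : Disjoint C B) :
    C ∩ stall X B a t n i = C ∩ X (stallIdx t n i) :=
  Set.ext fun _ => and_congr_right fun hv => mem_stall_of_notMem (hCB.notMem_of_mem_left hv)

lemma subset_stall_iff (hSB : Disjoint S B) : S ⊆ stall X B a t n i ↔ S ⊆ X (stallIdx t n i) :=
  forall₂_congr fun _ hs => mem_stall_of_notMem (hSB.notMem_of_mem_left hs)

lemma exists_sdiff_subset_stall (hn : 0 < n) (hj : j < l) :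
    ∃ i < l + n, stallIdx t n i = j ∧ X j \ B ⊆ stall X B a t n i := by
  obtain ⟨i, hi, -, rfl⟩ := exists_stallIdx_eq (t := t) hn hj
  exact ⟨i, hi, rfl, fun v hv => Or.inl hv⟩

namespace IsConfined

lemma lt (hB : IsConfined G l X B S a n) (ht : t ∈ Set.Ico a (a + n)) : t < l :=
  ht.2.trans_le hB.add_le

lemma disjoint_bag (hB : IsConfined G l X B S a n) (hi : i < a) : Disjoint (X i) B := by
  refine Set.disjoint_left.2 fun v hvi hvB => ?_
  obtain ⟨d, -, rfl⟩ := hB.exists_eq_add v hvB i (by have := hB.add_le; omega) hvi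
  omega

lemma disjoint_accumulate (hB : IsConfined G l X B S a n) (hi : i < a) :
    Disjoint (Set.accumulate X i) B :=
  Set.disjoint_iUnion₂_left.2 fun _ hj => hB.disjoint_bag (hj.trans_lt hi)

lemma subset_stall (hB : IsConfined G l X B S a n) (ht : t ∈ Set.Ico a (a + n))
    (hi : i ∈ Set.Icc t (t + n)) : S ⊆ stall X B a t n i := by
  rw [subset_stall_iff hB.disjoint, stallIdx_eq_of_mem_Icc hi]
  exact hB.subset_bag t ht

lemma inter_union_subset_stall (hB : IsConfined G l X B S a n) (ht : t ∈ Set.Ico a (a + n))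
    (hd : d < n) : X (a + d) ∩ B ∪ S ⊆ stall X B a t n (t + 1 + d) := by
  refine Set.union_subset (fun v hv => ?_) (hB.subset_stall ht ⟨by omega, by omega⟩)
  exact (mem_stall_of_mem hv.2).2 ⟨d, hd, rfl, hv.1⟩

lemma exists_adj_mem_stall {u : V} (hP : IsPathDecomp G l X) (hB : IsConfined G l X B S a n)
    (ht : t ∈ Set.Ico a (a + n)) (huB : u ∈ B) (huv : G.Adj u v) :
    ∃ i < l + n, u ∈ stall X B a t n i ∧ v ∈ stall X B a t n i := by
  obtain ⟨j, hj, huj, hvj⟩ := hP.2.1 u v huv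
  obtain ⟨d, hd, rfl⟩ := hB.exists_eq_add u huB j hj huj
  have hsub := hB.inter_union_subset_stall ht hd
  have hvBS : v ∈ X (a + d) ∩ B ∪ S := (em (v ∈ B)).imp (fun hvB => ⟨hvj, hvB⟩)
    fun hvB => hB.nbhdSet_subset ⟨hvB, u, huB, huv⟩
  have htl := hB.lt ht
  exact ⟨t + 1 + d, by omega, hsub (Or.inl ⟨huj, huB⟩), hsub hvBS⟩

lemma isPathDecomp_stall (hP : IsPathDecomp G l X) (hB : IsConfined G l X B S a n)
    (ht : t ∈ Set.Ico a (a + n)) : IsPathDecomp G (l + n) (stall X B a t n) := by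
  have htl := hB.lt ht
  have hal := hB.add_le
  refine ⟨fun v => ?_, fun u v huv => ?_, fun i j m hij hjm hm v hv => ?_⟩
  · obtain ⟨j, hj, hvj⟩ := hP.1 v
    by_cases hvB : v ∈ B
    · obtain ⟨d, hd, rfl⟩ := hB.exists_eq_add v hvB j hj hvj
      exact ⟨t + 1 + d, by omega, hB.inter_union_subset_stall ht hd (Or.inl ⟨hvj, hvB⟩)⟩
    · obtain ⟨i, hi, -, hsub⟩ := exists_sdiff_subset_stall hB.pos hj
      exact ⟨i, hi, hsub ⟨hvj, hvB⟩⟩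
  · by_cases huB : u ∈ B
    · exact hB.exists_adj_mem_stall hP ht huB huv
    by_cases hvB : v ∈ B
    · obtain ⟨i, hi, hvi, hui⟩ := hB.exists_adj_mem_stall hP ht hvB huv.symm
      exact ⟨i, hi, hui, hvi⟩
    obtain ⟨j, hj, huj, hvj⟩ := hP.2.1 u v huv
    obtain ⟨i, hi, -, hsub⟩ := exists_sdiff_subset_stall hB.pos hj
    exact ⟨i, hi, hsub ⟨huj, huB⟩, hsub ⟨hvj, hvB⟩⟩
  · by_cases hvB : v ∈ B
    · simp only [Set.mem_inter_iff, mem_stall_of_mem hvB] at hv ⊢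
      obtain ⟨⟨d, -, rfl, hvd⟩, e, he, rfl, hve⟩ := hv
      obtain ⟨r, rfl⟩ := Nat.exists_eq_add_of_le (show t + 1 ≤ j by omega)
      exact ⟨r, by omega, rfl,
        hP.2.2 (a + d) (a + r) (a + e) (by omega) (by omega) (by omega) ⟨hvd, hve⟩⟩
    · simp only [Set.mem_inter_iff, mem_stall_of_notMem hvB] at hv ⊢
      exact hP.2.2 _ _ _ (stallIdx_monotone _ _ hij) (stallIdx_monotone _ _ hjm)
        (stallIdx_lt htl hm) hv

lemma ncard_stall_le [Finite V] (hB : IsConfined G l X B S a n) (ht : t ∈ Set.Ico a (a + n))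
    (hmin : ∀ j ∈ Set.Ico a (a + n), (X t \ B).ncard ≤ (X j \ B).ncard)
    (hk : ∀ j < l, (X j).ncard ≤ k) (hi : i < l + n) : (stall X B a t n i).ncard ≤ k := by
  by_cases hwindow : ∃ d < n, i = t + 1 + d
  · obtain ⟨d, hd, rfl⟩ := hwindow
    have hal := hB.add_le
    have hsub : stall X B a t n (t + 1 + d) ⊆ X t \ B ∪ X (a + d) ∩ B := by
      rintro v (hv | ⟨hvB, e, -, hde, hve⟩)
      · rw [stallIdx_eq_of_mem_Icc ⟨by omega, by omega⟩] at hv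
        exact Or.inl hv
      · obtain rfl : d = e := by omega
        exact Or.inr ⟨hve, hvB⟩
    calc (stall X B a t n (t + 1 + d)).ncard
        ≤ (X t \ B ∪ X (a + d) ∩ B).ncard := Set.ncard_le_ncard hsub
      _ ≤ (X t \ B).ncard + (X (a + d) ∩ B).ncard := Set.ncard_union_le _ _
      _ ≤ (X (a + d) \ B).ncard + (X (a + d) ∩ B).ncard :=
        Nat.add_le_add_right (hmin _ ⟨by omega, by omega⟩) _
      _ = (X (a + d)).ncard := by rw [add_comm, Set.ncard_inter_add_ncard_sdiff_eq_ncard]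
      _ ≤ k := hk _ (by omega)
  · have hsub : stall X B a t n i ⊆ X (stallIdx t n i) := by
      rintro v (hv | ⟨-, d, hd, hid, -⟩)
      · exact hv.1
      · exact absurd ⟨d, hd, hid⟩ hwindow
    exact (Set.ncard_le_ncard hsub).trans (hk _ (stallIdx_lt (hB.lt ht) hi))

end IsConfined

lemma mem_accumulate_stall_of_notMem (hv : v ∉ B) :
    v ∈ Set.accumulate (stall X B a t n) i ↔ v ∈ Set.accumulate X (stallIdx t n i) := by
  simp only [Set.mem_accumulate, mem_stall_of_notMem hv]
  constructor
  · rintro ⟨j, hj, hvj⟩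
    exact ⟨_, stallIdx_monotone t n hj, hvj⟩
  · rintro ⟨j, hj, hvj⟩
    obtain ⟨m, hm, rfl⟩ := exists_le_stallIdx_eq hj
    exact ⟨m, hm, hvj⟩

lemma accumulate_stall_of_le (hi : i ≤ t) :
    Set.accumulate (stall X B a t n) i = Set.accumulate X i \ B := by
  ext v
  by_cases hvB : v ∈ B
  · refine iff_of_false (fun hv => ?_) fun hv => hv.2 hvB
    obtain ⟨j, hj, hvj⟩ := Set.mem_accumulate.1 hv
    have htj := (mem_Ioc_of_mem_stall hvB hvj).1
    omega
  · rw [mem_accumulate_stall_of_notMem hvB, stallIdx_of_le hi, Set.mem_sdiff,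
      and_iff_left hvB]

namespace IsConfined

/-- The minimum accounts for the indices after the stalling period, when `B` has already run through
all its bags. -/
lemma accumulate_stall_add (hB : IsConfined G l X B S a n) (d : ℕ) :
    Set.accumulate (stall X B a t n) (t + 1 + d) =
      Set.accumulate X (stallIdx t n (t + 1 + d)) \ B ∪
        Set.accumulate X (a + min d (n - 1)) ∩ B := by
  have hal := hB.add_le
  have hn := hB.pos
  ext v
  by_cases hvB : v ∈ B
  · simp only [Set.mem_union, Set.mem_sdiff, Set.mem_inter_iff, hvB, not_true_eq_false, and_false,
      and_true, false_or, Set.mem_accumulate, mem_stall_of_mem hvB]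
    constructor
    · rintro ⟨_, hj, e, he, rfl, hve⟩
      exact ⟨a + e, by omega, hve⟩
    · rintro ⟨j, hj, hvj⟩
      obtain ⟨e, he, rfl⟩ := hB.exists_eq_add v hvB j (by omega) hvj
      exact ⟨t + 1 + e, by omega, e, he, rfl, hvj⟩
  · simp [mem_accumulate_stall_of_notMem hvB, hvB]

lemma isAnchored_stall (hB : IsConfined G l X B S a n) (ht : t ∈ Set.Ico a (a + n))
    (hX : ∀ j < l, IsAnchored G I (Set.accumulate X j)) (hc : c < a) (hSc : S ⊆ X c)
    (hi : i < l + n) : IsAnchored G I (Set.accumulate (stall X B a t n) i) := by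
  have hal := hB.add_le
  have htl := hB.lt ht
  have hn := hB.pos
  have hA := hX c (by omega)
  have hAB := hB.disjoint_accumulate hc
  have hBA : nbhdSet G B ⊆ Set.accumulate X c :=
    hB.nbhdSet_subset.trans (hSc.trans (Set.subset_accumulate (s := X)))
  rcases le_or_gt i t with hit | hti
  · rw [accumulate_stall_of_le hit]
    rcases le_or_gt c i with hci | hic
    · have hempty : IsAnchored G I ∅ := fun C hC => absurd hC (by simp)
      simpa using (hX i (by omega)).sdiff_union_inter hempty hA
        (Set.monotone_accumulate hci) hAB hBA
    · rw [(hB.disjoint_accumulate (hic.trans hc)).sdiff_eq_left]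
      exact hX i (by omega)
  · obtain ⟨d, rfl⟩ := Nat.exists_eq_add_of_le hti
    have hct : c ≤ stallIdx t n (t.succ + d) := by
      have := le_stallIdx (n := n) (show t ≤ t.succ + d by omega)
      have := ht.1
      omega
    rw [hB.accumulate_stall_add]
    exact (hX _ (stallIdx_lt htl hi)).sdiff_union_inter (hX _ (by omega)) hA
      (Set.monotone_accumulate hct) hAB hBA

lemma image_supp_stall (hB : IsConfined G l X B S a n) (ht : t ∈ Set.Ico a (a + n))
    (hH : Disjoint H B ∨ (H ∩ S).Nonempty) :
    stallIdx t n '' supp (l + n) (stall X B a t n) H = supp l X H := by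
  refine Set.Subset.antisymm ?_ ?_
  · rintro _ ⟨i, ⟨hi, v, hvH, hvi⟩, rfl⟩
    refine ⟨stallIdx_lt (hB.lt ht) hi, ?_⟩
    by_cases hvB : v ∈ B
    · have hit := mem_Ioc_of_mem_stall hvB hvi
      rw [stallIdx_eq_of_mem_Icc ⟨hit.1.le, hit.2⟩]
      exact (hH.resolve_left (Set.not_disjoint_iff.2 ⟨v, hvH, hvB⟩)).mono
        (Set.inter_subset_inter_right _ (hB.subset_bag t ht))
    · exact ⟨v, hvH, (mem_stall_of_notMem hvB).1 hvi⟩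
  · rintro j ⟨hj, v, hvH, hvj⟩
    obtain ⟨i, hi, rfl, hsub⟩ :=
      exists_sdiff_subset_stall (X := X) (B := B) (a := a) (t := t) hB.pos hj
    refine ⟨i, ⟨hi, ?_⟩, rfl⟩
    by_cases hvB : v ∈ B
    · obtain ⟨d, hd, hid⟩ := hB.exists_eq_add v hvB _ hj hvj
      have hSi : S ⊆ stall X B a t n i :=
        (subset_stall_iff hB.disjoint).2 (hB.subset_bag _ ⟨by omega, by omega⟩)
      exact (hH.resolve_left (Set.not_disjoint_iff.2 ⟨v, hvH, hvB⟩)).mono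
        (Set.inter_subset_inter_right _ hSi)
    · exact ⟨v, hvH, hsub ⟨hvj, hvB⟩⟩

lemma isRetiming_stall (hB : IsConfined G l X B S a n) (ht : t ∈ Set.Ico a (a + n))
    (hTB : Disjoint T B) (hT : ∀ H, IsBranch G T H → Disjoint H B ∨ (H ∩ S).Nonempty) :
    IsRetiming G T a (stallIdx t n) l X (l + n) (stall X B a t n) where
  monotone := stallIdx_monotone t n
  apply_of_lt i hi := stallIdx_of_le (hi.le.trans ht.1)
  le_apply i hi := by
    have := ht.1
    simp only [stallIdx]
    omega
  bag_eq i hi := by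
    have hempty : {v | v ∈ B ∧ ∃ d < n, i = t + 1 + d ∧ v ∈ X (a + d)} = ∅ := by
      refine Set.eq_empty_of_forall_notMem fun v ⟨_, d, _, hid, _⟩ => ?_
      have := ht.1
      omega
    rw [stall, hempty, Set.union_empty, stallIdx_of_le (hi.le.trans ht.1),
      (hB.disjoint_bag hi).sdiff_eq_left]
  image_supp H hH := hB.image_supp_stall ht (hT H hH)
  subset_bag i := (subset_stall_iff hTB).1

end IsConfined

end Stall

/-! ### Structuring the interval of a bottleneck -/

section InBranchStall

variable {G : SimpleGraph V} {a l n t : ℕ} {X : ℕ → Set V} {H S : Set V}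

lemma isInBranch_stall_iff (hP : IsPathDecomp G l X)
    (hB : IsConfined G l X (inBranchUnion G l X S) S a n) (ht : t ∈ Set.Ico a (a + n)) :
    IsInBranch G (l + n) (stall X (inBranchUnion G l X S) a t n) S H ↔ IsInBranch G l X S H := by
  refine ⟨fun hH => ?_, fun hH => ?_⟩
  · by_contra hnot
    have hHB := hH.1.1.disjoint_inBranchUnion hnot
    exact hnot <| hH.of_image_supp hP (stallIdx_monotone t n)
      (hB.image_supp_stall ht (Or.inl hHB)) fun i => (subset_stall_iff hB.disjoint).1
  · have hP' := hB.isPathDecomp_stall hP ht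
    have hS : ∀ i ∈ supp (l + n) (stall X (inBranchUnion G l X S) a t n) H,
        S ⊆ stall X (inBranchUnion G l X S) a t n i := by
      rintro i ⟨-, v, hvH, hv⟩
      exact hB.subset_stall ht <| Set.Ioc_subset_Icc_self <|
        mem_Ioc_of_mem_stall (hH.subset_inBranchUnion hvH) hv
    exact ⟨hH.1, hS _ (hP'.firstIdx_mem_supp hH.nonempty),
      hS _ (hP'.lastIdx_mem_supp hH.nonempty)⟩

lemma botInterval_stall_subset (hP : IsPathDecomp G l X)
    (hB : IsConfined G l X (inBranchUnion G l X S) S a n) (ht : t ∈ Set.Ico a (a + n))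
    (hH : IsInBranch G (l + n) (stall X (inBranchUnion G l X S) a t n) S H) :
    botInterval G (l + n) (stall X (inBranchUnion G l X S) a t n) S ⊆ Set.Ioc t (t + n) := by
  have hP' := hB.isPathDecomp_stall hP ht
  have hsupp : ∀ C, IsInBranch G (l + n) (stall X (inBranchUnion G l X S) a t n) S C →
      supp (l + n) (stall X (inBranchUnion G l X S) a t n) C ⊆ Set.Ioc t (t + n) :=
    fun C hC _ ⟨_, _, hvC, hv⟩ =>
      mem_Ioc_of_mem_stall (((isInBranch_stall_iff hP hB ht).1 hC).subset_inBranchUnion hvC) hv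
  obtain ⟨C, hC, hstart⟩ := hH.exists_firstIdx_eq_botStart
  obtain ⟨D, hD, hend⟩ := hH.exists_lastIdx_eq_botEnd hP'
  exact fun i hi => ⟨(hstart ▸ hsupp C hC (hP'.firstIdx_mem_supp hC.nonempty)).1.trans_le hi.1,
    hi.2.trans (hend ▸ hsupp D hD (hP'.lastIdx_mem_supp hD.nonempty)).2⟩

lemma isStructured_stall (hP : IsPathDecomp G l X)
    (hB : IsConfined G l X (inBranchUnion G l X S) S a n) (ht : t ∈ Set.Ico a (a + n))
    (hH : IsInBranch G (l + n) (stall X (inBranchUnion G l X S) a t n) S H) :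
    IsStructured G (l + n) (stall X (inBranchUnion G l X S) a t n) S := by
  intro C hC
  have hcomp : IsCompOf G S C := by
    rcases hC with ⟨hC, -⟩ | ⟨hC, -⟩ | ⟨hC, -⟩
    exacts [hC, hC.1, hC.1]
  have hnot : ¬IsInBranch G l X S C := by
    rw [← isInBranch_stall_iff hP hB ht]
    rcases hC with ⟨-, hC⟩ | ⟨-, hC, -⟩ | ⟨-, hC, -⟩
    exacts [fun h => hC h.1, hC, hC]
  have hbag : ∀ i ∈ botInterval G (l + n) (stall X (inBranchUnion G l X S) a t n) S,
      C ∩ stall X (inBranchUnion G l X S) a t n i = C ∩ X t := fun i hi => by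
    rw [inter_stall_of_disjoint (hcomp.disjoint_inBranchUnion hnot), stallIdx_eq_of_mem_Icc
      (Set.Ioc_subset_Icc_self (botInterval_stall_subset hP hB ht hH hi))]
  intro i hsi hie
  rw [hbag i ⟨hsi, hie⟩, hbag _ ⟨le_rfl, hsi.trans hie⟩]

end InBranchStall

namespace IsAdmissible

variable [Finite V] {G : SimpleGraph V} {I : Set V} {c k l : ℕ} {T S : Set V} {X : ℕ → Set V}

lemma isConfined (h : IsAdmissible G I k T S l X) :
    ∃ n, IsConfined G l X (inBranchUnion G l X S) S (botStart G l X S) n := by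
  have hstart := h.botStart_mem_botInterval.2
  obtain ⟨n, hn⟩ := Nat.exists_eq_add_of_le hstart
  obtain ⟨C, hC⟩ := h.exists_isInBranch_right
  have hend := hC.botEnd_lt h.isPathDecomp
  refine ⟨n + 1, n.succ_pos, by omega, fun v hv i hi hvi => ?_, nbhdSet_inBranchUnion_subset,
    disjoint_inBranchUnion, fun i hi => h.subset_bag ⟨hi.1, ?_⟩⟩
  · obtain ⟨hsi, hie⟩ := mem_botInterval_of_mem_inBranchUnion h.isPathDecomp hv hi hvi
    exact ⟨i - botStart G l X S, by omega, by omega⟩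
  · have := hi.2
    omega

lemma disjoint_left_inBranchUnion (h : IsAdmissible G I k T S l X) :
    Disjoint T (inBranchUnion G l X S) := by
  obtain ⟨H, hH⟩ := h.exists_isInBranch_left
  have hTX : T ⊆ X (botEnd G l X T) :=
    hH.subset_bag h.isPathDecomp ⟨hH.botStart_le_botEnd h.isPathDecomp, le_rfl⟩
  exact (disjoint_accumulate_inBranchUnion h.isPathDecomp (hH.botEnd_lt h.isPathDecomp)
    h.botEnd_lt).mono_left (hTX.trans (Set.subset_accumulate (s := X)))

lemma disjoint_or_inter_nonempty (h : IsAdmissible G I k T S l X) {H : Set V}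
    (hH : IsBranch G T H) : Disjoint H (inBranchUnion G l X S) ∨ (H ∩ S).Nonempty := by
  by_contra! hmeet
  obtain ⟨hHB, hHS⟩ := hmeet
  obtain ⟨v, hvH, Q, hQ, hvQ⟩ := Set.not_disjoint_iff.1 hHB
  have hTQ : Disjoint T Q :=
    h.disjoint_left_inBranchUnion.mono_right hQ.subset_inBranchUnion
  have hSH : Disjoint S H := (Set.disjoint_iff_inter_eq_empty.2 hHS).symm
  have hST : S = T := hQ.1.eq_of_mem hH hTQ hSH hvQ hvH
  exact absurd (hST ▸ h.botEnd_lt) h.botStart_mem_botInterval.2.not_gt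

lemma exists_isStructured (h : IsAdmissible G I k T S l X) (hc : c < botStart G l X S)
    (hSc : S ⊆ X c) : ∃ l' X', IsAdmissible G I k T S l' X' ∧ IsStructured G l' X' S := by
  obtain ⟨n, hB⟩ := h.isConfined
  obtain ⟨t, ht, hmin⟩ := (Set.Ico (botStart G l X S) (botStart G l X S + n)).exists_min_image
    (fun i => (X i \ inBranchUnion G l X S).ncard) (Set.toFinite _)
    (Set.nonempty_Ico.2 (by have := hB.pos; omega))
  have hP := hB.isPathDecomp_stall h.isPathDecomp ht
  have hcard := fun i => hB.ncard_stall_le (i := i) ht hmin h.ncard_le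
  have hf := hB.isRetiming_stall ht h.disjoint_left_inBranchUnion
    fun _ => h.disjoint_or_inter_nonempty
  obtain ⟨H₀, hH₀⟩ := h.exists_isInBranch_left
  obtain ⟨H, hH⟩ := h.isBottleneck_right.exists_isInBranch hP hcard
  have hstart := botInterval_stall_subset h.isPathDecomp hB ht hH ⟨le_rfl, hH.botStart_le_botEnd hP⟩
  refine ⟨_, _, ⟨h.isBottleneck_left, h.isBottleneck_right, hP,
    fun i => hB.isAnchored_stall ht h.isAnchored hc hSc, hcard,
    hf.isStructured h.isPathDecomp h.botEnd_lt hH₀ h.isStructured, ?_⟩,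
    isStructured_stall h.isPathDecomp hB ht hH⟩
  rw [hf.botEnd_eq h.isPathDecomp h.botEnd_lt]
  exact (h.botEnd_lt.trans_le ht.1).trans hstart.1

end IsAdmissible

/-- if an `I`-connected path decomposition of width at most `k-1` is
`S`-structured and `β(S,P) < α(S',P)`, then there is an `I`-connected path
decomposition of no larger width that is both `S`- and `S'`-structured, with
`β(S,P') < α(S',P')`. -/
theorem stmt18 [Fintype V] (k : ℕ) (hk : 1 ≤ k) (G : SimpleGraph V) (I : Set V)
    (l : ℕ) (X : ℕ → Set V) (hP : IsPathDecomp G l X) (hIc : IsIConn G l X I)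
    (hw : pdWidth l X ≤ k - 1)
    (S S' : Set V) (hS : IsBottleneck G k S) (hS' : IsBottleneck G k S')
    (hstr : IsStructured G l X S)
    (hlt : botEnd G l X S < botStart G l X S') :
    ∃ (l' : ℕ) (X' : ℕ → Set V),
      IsPathDecomp G l' X' ∧ IsIConn G l' X' I ∧
      pdWidth l' X' ≤ pdWidth l X ∧
      IsStructured G l' X' S ∧ IsStructured G l' X' S' ∧
      botEnd G l' X' S < botStart G l' X' S' := by
  set w := (Finset.range l).sup fun i => (X i).ncard
  have hwk : w ≤ k := by
    have : w - 1 ≤ k - 1 := hw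
    omega
  have h : IsAdmissible G I w S S' l X :=
    { isBottleneck_left := hS.mono hwk
      isBottleneck_right := hS'.mono hwk
      isPathDecomp := hP
      isAnchored := isIConn_iff_isAnchored_accumulate.1 hIc
      ncard_le := fun i hi =>
        Finset.le_sup (f := fun i => (X i).ncard) (Finset.mem_range.2 hi)
      isStructured := hstr
      botEnd_lt := hlt }
  obtain ⟨l₁, X₁, h₁, c, hc, hS'c⟩ := h.exists_subset_bag_of_lt_botStart
  obtain ⟨l₂, X₂, h₂, hstr₂⟩ := h₁.exists_isStructured hc hS'c
  have hwidth : pdWidth l₂ X₂ ≤ pdWidth l X :=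
    Nat.sub_le_sub_right (Finset.sup_le fun i hi => h₂.ncard_le i (Finset.mem_range.1 hi)) 1
  exact ⟨l₂, X₂, h₂.isPathDecomp, isIConn_iff_isAnchored_accumulate.2 h₂.isAnchored, hwidth,
    h₂.isStructured, hstr₂, h₂.botEnd_lt⟩
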